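/- arXiv:2405.16463 — 2 statements merged into one kernel-verified Lean document; each statement's English description precedes it below -/
import Mathlib

section
/- (Massey's conservation law.) Let X^m and Y^m be jointly distributed random variables taking values in finite sets. Then I(X^m; Y^m) = I(X^m → Y^m) + I(D^1 ∘ Y^m → X^m), i.e., mutual information decomposes into the directed information from X to Y plus the one-step delayed directed information from Y to X. -/
open MeasureTheory Finset

variable {Ω : Type*} [MeasurableSpace Ω]

/-- Shannon entropy of a random variable `W` with values in a finite set:
`H(W) = -∑ w, P(W = w) log P(W = w)`. -/
noncomputable def entropy (μ : Measure Ω) {α : Type*} [Fintype α] (W : Ω → α) : ℝ :=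
  -∑ w : α, (μ (W ⁻¹' {w})).toReal * Real.log (μ (W ⁻¹' {w})).toReal

/-- Conditional entropy `H(W | V) = H(W, V) - H(V)`. -/
noncomputable def condEntropy (μ : Measure Ω) {α β : Type*} [Fintype α] [Fintype β]
    (W : Ω → α) (V : Ω → β) : ℝ :=
  entropy μ (fun ω => (W ω, V ω)) - entropy μ V

/-- Conditional mutual information `I(A; B | C) = H(A|C) + H(B|C) - H(A,B|C)`. -/
noncomputable def condMI (μ : Measure Ω) {α β γ : Type*} [Fintype α] [Fintype β] [Fintype γ]
    (A : Ω → α) (B : Ω → β) (C : Ω → γ) : ℝ :=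
  condEntropy μ A C + condEntropy μ B C - condEntropy μ (fun ω => (A ω, B ω)) C

/-- Mutual information `I(A; B) = H(A) + H(B) - H(A,B)`. -/
noncomputable def mutualInfo (μ : Measure Ω) {α β : Type*} [Fintype α] [Fintype β]
    (A : Ω → α) (B : Ω → β) : ℝ :=
  entropy μ A + entropy μ B - entropy μ (fun ω => (A ω, B ω))

/-- The prefix `X^i = (X_1, …, X_i)` of the sequence `X` (1-based indexing);
`X^0` is the empty (constant) random variable. -/
def pref {𝒳 : Type*} (X : ℕ → Ω → 𝒳) (i : ℕ) : Ω → (Fin i → 𝒳) :=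
  fun ω t => X (t.1 + 1) ω

/-- The InfoMat entry `I_{i,j} = I(X_i; Y_j | X^{i-1}, Y^{j-1})`. -/
noncomputable def infoMat (μ : Measure Ω) {𝒳 𝒴 : Type*} [Fintype 𝒳] [Fintype 𝒴]
    (X : ℕ → Ω → 𝒳) (Y : ℕ → Ω → 𝒴) (i j : ℕ) : ℝ :=
  condMI μ (X i) (Y j) (fun ω => (pref X (i - 1) ω, pref Y (j - 1) ω))

/-- Directed information `I(X^m → Y^m) = ∑_{i=1}^m I(X^i; Y_i | Y^{i-1})`. -/
noncomputable def directedInfo (μ : Measure Ω) {𝒳 𝒴 : Type*} [Fintype 𝒳] [Fintype 𝒴]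
    (m : ℕ) (X : ℕ → Ω → 𝒳) (Y : ℕ → Ω → 𝒴) : ℝ :=
  ∑ i ∈ Finset.Icc 1 m, condMI μ (pref X i) (Y i) (pref Y (i - 1))

/-- `k`-step delayed directed information
`I(D^k ∘ X^m → Y^m) = ∑_{i=k+1}^m I(X^{i-k}; Y_i | Y^{i-1})`. -/
noncomputable def delayedDI (μ : Measure Ω) {𝒳 𝒴 : Type*} [Fintype 𝒳] [Fintype 𝒴]
    (m k : ℕ) (X : ℕ → Ω → 𝒳) (Y : ℕ → Ω → 𝒴) : ℝ :=
  ∑ i ∈ Finset.Icc (k + 1) m, condMI μ (pref X (i - k)) (Y i) (pref Y (i - 1))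

/-- Instantaneous information `I_inst(X^m, Y^m) = ∑_{i=1}^m I(X_i; Y_i | X^{i-1}, Y^{i-1})`. -/
noncomputable def instInfo (μ : Measure Ω) {𝒳 𝒴 : Type*} [Fintype 𝒳] [Fintype 𝒴]
    (m : ℕ) (X : ℕ → Ω → 𝒳) (Y : ℕ → Ω → 𝒴) : ℝ :=
  ∑ i ∈ Finset.Icc 1 m, infoMat μ X Y i i

variable {𝒳 𝒴 : Type*} [Fintype 𝒳] [MeasurableSpace 𝒳] [MeasurableSingletonClass 𝒳]
  [Fintype 𝒴] [MeasurableSpace 𝒴] [MeasurableSingletonClass 𝒴]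

/-!
Pass from `I(X^n; Y^n)` to `I(X^{n+1}; Y^{n+1})` by appending first `X_{n+1}`, then `Y_{n+1}`. By
the chain rule, the first move adds `I(Y^n; X_{n+1} | X^n)`, the new term of the delayed directed
information, and the second adds `I(X^{n+1}; Y_{n+1} | Y^n)`, the new term of the directed
information.
-/

section Entropy

variable (μ : Measure Ω) {α β γ : Type*} [Fintype α] [Fintype β] [Fintype γ]

theorem entropy_equiv_comp (e : α ≃ β) (W : Ω → α) :
    entropy μ (fun ω => e (W ω)) = entropy μ W := by
  have preimage_eq (a : α) : (fun ω => e (W ω)) ⁻¹' {e a} = W ⁻¹' {a} := by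
    ext ω
    simp
  simp only [entropy, ← e.sum_comp, preimage_eq]

theorem entropy_prodMk_comm (A : Ω → α) (B : Ω → β) :
    entropy μ (fun ω => (A ω, B ω)) = entropy μ (fun ω => (B ω, A ω)) :=
  entropy_equiv_comp μ (Equiv.prodComm β α) fun ω => (B ω, A ω)

theorem entropy_prodMk_assoc (A : Ω → α) (B : Ω → β) (C : Ω → γ) :
    entropy μ (fun ω => (A ω, B ω, C ω)) = entropy μ (fun ω => ((A ω, B ω), C ω)) :=
  entropy_equiv_comp μ (Equiv.prodAssoc α β γ) fun ω => ((A ω, B ω), C ω)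

theorem entropy_prodMk_of_unique_left [Unique α] (A : Ω → α) (B : Ω → β) :
    entropy μ (fun ω => (A ω, B ω)) = entropy μ B :=
  (entropy_equiv_comp μ (Equiv.uniqueProd β α) fun ω => (A ω, B ω)).symm

theorem entropy_of_subsingleton [IsProbabilityMeasure μ] [Subsingleton α] (A : Ω → α) :
    entropy μ A = 0 := by
  have preimage_eq_univ (a : α) : A ⁻¹' {a} = Set.univ :=
    Set.eq_univ_of_forall fun ω => Subsingleton.elim (A ω) a
  simp [entropy, preimage_eq_univ]

theorem mutualInfo_comm (A : Ω → α) (B : Ω → β) : mutualInfo μ A B = mutualInfo μ B A := by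
  rw [mutualInfo, mutualInfo, entropy_prodMk_comm, add_comm (entropy μ A)]

theorem mutualInfo_equiv_comp_right (e : β ≃ γ) (A : Ω → α) (B : Ω → β) :
    mutualInfo μ A (fun ω => e (B ω)) = mutualInfo μ A B := by
  have entropy_pair : entropy μ (fun ω => (A ω, e (B ω))) = entropy μ (fun ω => (A ω, B ω)) :=
    entropy_equiv_comp μ ((Equiv.refl α).prodCongr e) fun ω => (A ω, B ω)
  rw [mutualInfo, mutualInfo, entropy_equiv_comp, entropy_pair]

theorem mutualInfo_of_unique_left [Unique α] (A : Ω → α) (B : Ω → β) :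
    mutualInfo μ A B = entropy μ A := by
  rw [mutualInfo, entropy_prodMk_of_unique_left, add_sub_cancel_right]

theorem mutualInfo_chain_rule (A : Ω → α) (B : Ω → β) (C : Ω → γ) :
    mutualInfo μ A (fun ω => (B ω, C ω)) = mutualInfo μ A C + condMI μ A B C := by
  simp only [mutualInfo, condMI, condEntropy, entropy_prodMk_assoc]
  ring

theorem condMI_of_unique_left [Unique α] (A : Ω → α) (B : Ω → β) (C : Ω → γ) :
    condMI μ A B C = 0 := by
  have chain_rule := mutualInfo_chain_rule μ A B C
  rwa [mutualInfo_of_unique_left, mutualInfo_of_unique_left, left_eq_add] at chain_rule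

end Entropy

section Prefix

theorem pref_succ {Ω α : Type*} (X : ℕ → Ω → α) (n : ℕ) :
    pref X (n + 1) = fun ω => Fin.snocEquiv (fun _ => α) (X (n + 1) ω, pref X n ω) := by
  funext ω t
  cases t using Fin.lastCases <;> simp [Fin.snocEquiv, pref]

variable (μ : Measure Ω) {α β : Type*} [Fintype α] [Fintype β]

theorem mutualInfo_pref_succ_right (A : Ω → α) (Y : ℕ → Ω → β) (n : ℕ) :
    mutualInfo μ A (pref Y (n + 1)) =
      mutualInfo μ A (pref Y n) + condMI μ A (Y (n + 1)) (pref Y n) := by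
  rw [pref_succ, mutualInfo_equiv_comp_right, mutualInfo_chain_rule]

theorem mutualInfo_pref_succ_left (X : ℕ → Ω → α) (B : Ω → β) (n : ℕ) :
    mutualInfo μ (pref X (n + 1)) B =
      mutualInfo μ (pref X n) B + condMI μ B (X (n + 1)) (pref X n) := by
  rw [mutualInfo_comm, mutualInfo_pref_succ_right, mutualInfo_comm]

theorem directedInfo_succ (X : ℕ → Ω → α) (Y : ℕ → Ω → β) (n : ℕ) :
    directedInfo μ (n + 1) X Y =
      directedInfo μ n X Y + condMI μ (pref X (n + 1)) (Y (n + 1)) (pref Y n) :=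
  sum_Icc_succ_top (Nat.le_add_left 1 n) _

theorem delayedDI_one_succ (X : ℕ → Ω → α) (Y : ℕ → Ω → β) (n : ℕ) :
    delayedDI μ (n + 1) 1 X Y =
      delayedDI μ n 1 X Y + condMI μ (pref X n) (Y (n + 1)) (pref Y n) := by
  cases n with
  | zero =>
    -- The delayed sum starts at index 2, so the term appended here has to vanish.
    simp [delayedDI, condMI_of_unique_left]
  | succ n => exact sum_Icc_succ_top (Nat.le_add_left 2 n) _

end Prefix

/-- **Massey's conservation law.**
`I(X^m; Y^m) = I(X^m → Y^m) + I(D^1 ∘ Y^m → X^m)`. -/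
theorem massey_conservation (μ : Measure Ω) [IsProbabilityMeasure μ]
    (m : ℕ) (X : ℕ → Ω → 𝒳) (Y : ℕ → Ω → 𝒴)
    (hX : ∀ i, Measurable (X i)) (hY : ∀ j, Measurable (Y j)) :
    mutualInfo μ (pref X m) (pref Y m)
      = directedInfo μ m X Y + delayedDI μ m 1 Y X := by
  induction m with
  | zero => simp [directedInfo, delayedDI, mutualInfo_of_unique_left, entropy_of_subsingleton]
  | succ n ih =>
    rw [mutualInfo_pref_succ_right, mutualInfo_pref_succ_left, ih, directedInfo_succ,
      delayedDI_one_succ]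
    ring
end

section
/- (Directed information chain rule.) Let X^m and Y^m be jointly distributed random variables taking values in finite sets and let 0 ≤ k < m. Then I(D^k ∘ X^m → Y^m) = I(D^{k+1} ∘ X^m → Y^m) + Σ_{i=k+1}^m I(X_{i-k}; Y_i | X^{i-k-1}, Y^{i-1}), i.e., the k-step delayed directed information equals the (k+1)-step delayed directed information plus the sum of the k-th superdiagonal entries of the InfoMat. -/
open MeasureTheory Finset

variable {Ω : Type*} [MeasurableSpace Ω]

variable {𝒳 𝒴 : Type*} [Fintype 𝒳] [MeasurableSpace 𝒳] [MeasurableSingletonClass 𝒳]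
  [Fintype 𝒴] [MeasurableSpace 𝒴] [MeasurableSingletonClass 𝒴]

/-!
An injective relabelling of values does not change entropy. Hence `X^{n+1}` may be replaced by the
pair `(X_{n+1}, X^n)`, and the chain rule `I(A, A'; B | C) = I(A'; B | C) + I(A; B | A', C)` peels
the last symbol off the prefix in each summand `I(X^{i-k}; Y_i | Y^{i-1})`. The peeled terms are the
superdiagonal entries; the remaining ones form the `(k + 1)`-delayed sum, up to the summand
`i = k + 1`, which vanishes because `X^0` is constant.
-/

section RandomVariables

variable {α α' β γ : Type*} [Fintype α] [Fintype α'] [Fintype β] [Fintype γ] (μ : Measure Ω)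

theorem entropy_comp_of_injective {f : α → β} (hf : f.Injective) (W : Ω → α) :
    entropy μ (f ∘ W) = entropy μ W := by
  have preimage_of_notMem_range {b : β} (hb : b ∉ Set.range f) : f ∘ W ⁻¹' {b} = ∅ := by
    rw [Set.preimage_comp, Set.preimage_singleton_eq_empty.mpr hb, Set.preimage_empty]
  have preimage_apply (a : α) : f ∘ W ⁻¹' {f a} = W ⁻¹' {a} := by
    rw [Set.preimage_comp, ← Set.image_singleton, hf.preimage_image]
  unfold entropy
  congr 1
  symm
  refine Fintype.sum_of_injective f hf _ _ (fun b hb => ?_) (fun a => ?_)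
  · simp [preimage_of_notMem_range hb]
  · rw [preimage_apply]

theorem condEntropy_comp_left_of_injective {f : α → β} (hf : f.Injective) (W : Ω → α)
    (V : Ω → γ) : condEntropy μ (f ∘ W) V = condEntropy μ W V :=
  congrArg (· - entropy μ V) <|
    entropy_comp_of_injective μ (hf.prodMap Function.injective_id) fun ω => (W ω, V ω)

theorem condEntropy_of_subsingleton [Subsingleton α] (W : Ω → α) (V : Ω → β) :
    condEntropy μ W V = 0 :=
  sub_eq_zero.mpr
    (entropy_comp_of_injective μ Prod.snd_injective fun ω => (W ω, V ω)).symm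

theorem condMI_comp_left_of_injective {f : α → α'} (hf : f.Injective) (A : Ω → α) (B : Ω → β)
    (C : Ω → γ) : condMI μ (f ∘ A) B C = condMI μ A B C := by
  have joint : condEntropy μ (fun ω => ((f ∘ A) ω, B ω)) C
      = condEntropy μ (fun ω => (A ω, B ω)) C :=
    condEntropy_comp_left_of_injective μ (hf.prodMap Function.injective_id)
      (fun ω => (A ω, B ω)) C
  rw [condMI, condMI, condEntropy_comp_left_of_injective μ hf, joint]

theorem condMI_of_subsingleton_left [Subsingleton α] (A : Ω → α) (B : Ω → β) (C : Ω → γ) :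
    condMI μ A B C = 0 := by
  have joint : condEntropy μ B C = condEntropy μ (fun ω => (A ω, B ω)) C :=
    condEntropy_comp_left_of_injective μ Prod.snd_injective (fun ω => (A ω, B ω)) C
  rw [condMI, condEntropy_of_subsingleton, zero_add, joint, sub_self]

theorem condMI_prodMk_left (A : Ω → α) (A' : Ω → α') (B : Ω → β) (C : Ω → γ) :
    condMI μ (fun ω => (A ω, A' ω)) B C
      = condMI μ A' B C + condMI μ A B (fun ω => (A' ω, C ω)) := by
  have regroup_sources : entropy μ (fun ω => (A ω, A' ω, C ω))
      = entropy μ (fun ω => ((A ω, A' ω), C ω)) :=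
    entropy_comp_of_injective μ (Equiv.prodAssoc α α' γ).injective
      (fun ω => ((A ω, A' ω), C ω))
  have regroup_target : entropy μ (fun ω => (B ω, A' ω, C ω))
      = entropy μ (fun ω => ((A' ω, B ω), C ω)) :=
    entropy_comp_of_injective μ
      (((Equiv.prodComm α' β).prodCongr (.refl γ)).trans (.prodAssoc β α' γ)).injective
      (fun ω => ((A' ω, B ω), C ω))
  have regroup_all : entropy μ (fun ω => ((A ω, B ω), A' ω, C ω))
      = entropy μ (fun ω => (((A ω, A' ω), B ω), C ω)) :=
    entropy_comp_of_injective μ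
      ((Equiv.prodAssoc (α × α') β γ).trans (.prodProdProdComm α α' β γ)).injective
      (fun ω => (((A ω, A' ω), B ω), C ω))
  unfold condMI condEntropy
  rw [regroup_sources, regroup_target, regroup_all]
  ring

theorem condMI_pref_succ (X : ℕ → Ω → α) (B : Ω → β) (C : Ω → γ) (n : ℕ) :
    condMI μ (pref X (n + 1)) B C
      = condMI μ (pref X n) B C + condMI μ (X (n + 1)) B (fun ω => (pref X n ω, C ω)) :=
  calc condMI μ (pref X (n + 1)) B C
      = condMI μ (fun ω => (X (n + 1) ω, pref X n ω)) B C :=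
        (condMI_comp_left_of_injective μ (Fin.snocEquiv fun _ => α).symm.injective _ B C).symm
    _ = condMI μ (pref X n) B C + condMI μ (X (n + 1)) B (fun ω => (pref X n ω, C ω)) :=
        condMI_prodMk_left μ _ _ B C

end RandomVariables

section Sequences

variable {α β : Type*} [Fintype α] [Fintype β] (μ : Measure Ω) (X : ℕ → Ω → α) (Y : ℕ → Ω → β)

theorem condMI_pref_eq_add_infoMat {i : ℕ} (hi : i ≠ 0) (j : ℕ) :
    condMI μ (pref X i) (Y j) (pref Y (j - 1))
      = condMI μ (pref X (i - 1)) (Y j) (pref Y (j - 1)) + infoMat μ X Y i j := by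
  obtain ⟨n, rfl⟩ := Nat.exists_eq_succ_of_ne_zero hi
  exact condMI_pref_succ μ X (Y j) (pref Y (j - 1)) n

theorem delayedDI_succ_eq_sum_Icc (m k : ℕ) :
    delayedDI μ m (k + 1) X Y
      = ∑ i ∈ Icc (k + 1) m, condMI μ (pref X (i - k - 1)) (Y i) (pref Y (i - 1)) := by
  refine sum_subset (Icc_subset_Icc_left (Nat.le_succ _)) fun i hi hi' => ?_
  have prefix_empty : i - (k + 1) = 0 := by
    simp only [mem_Icc] at hi hi'
    omega
  rw [prefix_empty]
  exact condMI_of_subsingleton_left μ (pref X 0) (Y i) (pref Y (i - 1))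

theorem delayedDI_chain_rule_general [IsFiniteMeasure μ] (m k : ℕ) :
    delayedDI μ m k X Y
      = delayedDI μ m (k + 1) X Y + ∑ i ∈ Icc (k + 1) m, infoMat μ X Y (i - k) i := by
  rw [delayedDI_succ_eq_sum_Icc, ← sum_add_distrib]
  refine sum_congr rfl fun i hi => condMI_pref_eq_add_infoMat μ X Y ?_ i
  exact Nat.sub_ne_zero_of_lt (mem_Icc.mp hi).1

end Sequences

/-- **Directed information chain rule.** For `0 ≤ k < m`,
`I(D^k ∘ X^m → Y^m) = I(D^{k+1} ∘ X^m → Y^m) + ∑_{i=k+1}^m I(X_{i-k}; Y_i | X^{i-k-1}, Y^{i-1})`,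
i.e. the `k`-step delayed directed information equals the `(k+1)`-step delayed directed
information plus the sum of the `k`-th superdiagonal entries of the InfoMat. -/
theorem delayedDI_chain_rule (μ : Measure Ω) [IsProbabilityMeasure μ]
    (m k : ℕ) (hk : k < m) (X : ℕ → Ω → 𝒳) (Y : ℕ → Ω → 𝒴)
    (hX : ∀ i, Measurable (X i)) (hY : ∀ j, Measurable (Y j)) :
    delayedDI μ m k X Y
      = delayedDI μ m (k + 1) X Y
        + ∑ i ∈ Finset.Icc (k + 1) m, infoMat μ X Y (i - k) i :=
  delayedDI_chain_rule_general μ X Y m k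
end
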